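/- Let a ∈ {11, 19, 43, 67, 163} and let n be a positive integer. Then there are no integers x, y, z with gcd(x,y) = 1 satisfying a·x^2 + y^{2n} = 4z^3, and there are no integers x, y, z with gcd(x,y) = 1 satisfying x^2 + a·y^{2n} = 4z^3. -/

import Mathlib

/-!
Write `a = 4 * k - 1`, so that `k` is odd and `R = ℤ[ω]` with `ω ^ 2 = ω - k` is the order of
discriminant `-a`. Both equations have the shape `a * x ^ 2 + y ^ 2 = 4 * z ^ 3` with `x`, `y`
coprime and, necessarily, of the same parity; hence `α = (y + x * √(-a)) / 2` lies in `R` and has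
norm `z ^ 3`. As `a` is squarefree, `α` is coprime to its conjugate, so the ideal `(α)` is a cube.
If the class number of `R` is prime to `3` then `α = ± γ ^ 3`. Since `k` is odd, `R / 2` is the
field with four elements, in which every cube lies in the prime field: this forces `x`, and then
`y`, to be even, contradicting coprimality.

For the five given values of `a` the ring `R` is principal by Gauss reduction of the ideals
`(n, θ)` with `θ = r + ω`: replacing `θ` by a translate and `(n, θ)` by the equivalent ideal
`(m, star θ)`, where `n * m = N(θ)`, decreases `n` until `3 * n ^ 2 ≤ a`, and all primes `p` with
`3 * p ^ 2 ≤ a` are inert.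
-/

theorem exists_associated_pow_of_mul_eq_pow_of_coprime_classNumber {R : Type*} [CommRing R]
    [IsDedekindDomain R] [Fintype (ClassGroup R)] {n : ℕ}
    (hn : n.Coprime (Fintype.card (ClassGroup R))) {a b c : R} (hab : IsCoprime a b)
    (h : a * b = c ^ n) : ∃ d, Associated (d ^ n) a := by
  have hgcd : IsUnit (gcd (Ideal.span {a}) (Ideal.span {b})) := by
    rwa [Ideal.gcd_eq_sup, Ideal.isUnit_iff, ← Ideal.isCoprime_iff_sup_eq,
      Ideal.isCoprime_span_singleton_iff]
  obtain ⟨I, hI⟩ := exists_eq_pow_of_mul_eq_pow (c := Ideal.span {c}) hgcd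
    (by rw [Ideal.span_singleton_mul_span_singleton, h, Ideal.span_singleton_pow])
  obtain ⟨d, hd⟩ : I.IsPrincipal :=
    Ideal.IsPrincipal.of_isPrincipal_pow_of_coprime hn (hI ▸ ⟨a, rfl⟩)
  refine ⟨d, ?_⟩
  rw [← Ideal.span_singleton_eq_span_singleton, ← Ideal.span_singleton_pow, hI, hd]

theorem isPrincipal_span_pair_of_mul_eq_mul {R : Type*} [CommRing R] [IsDomain R] {x y u v : R}
    (hv : v ≠ 0) (h : x * u = y * v) (huv : (Ideal.span {u, v}).IsPrincipal) :
    (Ideal.span {x, y}).IsPrincipal := by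
  obtain ⟨δ, hδ⟩ := huv
  rw [Ideal.submodule_span_eq] at hδ
  have hmul : Ideal.span {v} * Ideal.span {x, y} = Ideal.span {x * δ} := by
    rw [← Ideal.span_singleton_mul_span_singleton, ← hδ]
    simp only [Ideal.span_insert, Ideal.mul_sup, Ideal.span_singleton_mul_span_singleton]
    rw [h, mul_comm v x, mul_comm v y, sup_comm]
  obtain ⟨ε, -, hε⟩ : ∃ ε ∈ Ideal.span {x, y}, v * ε = x * δ := by
    rw [← Ideal.mem_span_singleton_mul, hmul]
    exact Ideal.mem_span_singleton_self _
  refine ⟨ε, Ideal.span_singleton_mul_right_injective hv ?_⟩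
  simp only [Ideal.submodule_span_eq, Ideal.span_singleton_mul_span_singleton, hmul, hε]

theorem isCoprime_of_sq_dvd_mul_sq_add_sq {a x y z : ℤ} (ha : Squarefree a) (hxy : IsCoprime x y)
    (h : z ^ 2 ∣ a * x ^ 2 + y ^ 2) : IsCoprime y z := by
  refine isCoprime_of_prime_dvd ?_ fun p hp hpy hpz ↦ ?_
  · rintro ⟨rfl, rfl⟩
    have : IsUnit x := isCoprime_zero_right.mp hxy
    simp [(this.pow 2).ne_zero, ha.ne_zero] at h
  · have hpax : p ^ 2 ∣ a * x ^ 2 :=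
      (dvd_add_left (pow_dvd_pow_of_dvd hpy 2)).mp ((pow_dvd_pow_of_dvd hpz 2).trans h)
    have hpx : IsCoprime (p ^ 2) (x ^ 2) := (hxy.symm.of_isCoprime_of_dvd_left hpy).pow
    exact hp.not_isUnit (ha p (sq p ▸ hpx.dvd_of_dvd_mul_right hpax))

theorem exists_eq_add_mul_and_abs_two_mul_add_one_le {n : ℕ} (hn : 0 < n) (r : ℤ) :
    ∃ s q : ℤ, r = s + q * n ∧ |2 * s + 1| ≤ n := by
  refine ⟨r.bmod n, r.bdiv n, (Int.bmod_add_bdiv' r n).symm, abs_le.mpr ?_⟩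
  have := Int.le_bmod (x := r) hn
  have := Int.bmod_lt (x := r) hn
  omega

/-- The order of discriminant `1 - 4 * k` in `ℚ(√(1 - 4 * k))`, presented as `ℤ[ω]` with
`ω ^ 2 = ω - k`, so that `⟨r, s⟩` stands for `r + s * ω`. -/
abbrev QuadraticOrder (k : ℤ) : Type := QuadraticAlgebra ℤ (-k) 1

namespace QuadraticOrder

variable {k : ℤ}

theorem norm_eq (α : QuadraticOrder k) :
    α.norm = α.re ^ 2 + α.re * α.im + k * α.im ^ 2 := by
  rw [QuadraticAlgebra.norm_def]; ring

theorem four_mul_norm (α : QuadraticOrder k) :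
    4 * α.norm = (2 * α.re + α.im) ^ 2 + (4 * k - 1) * α.im ^ 2 := by
  rw [norm_eq]; ring

theorem intCast_norm (α : QuadraticOrder k) : (α.norm : QuadraticOrder k) = α * star α :=
  QuadraticAlgebra.algebraMap_norm_eq_mul_star α

theorem norm_pos (hk : 0 < k) {α : QuadraticOrder k} (hα : α ≠ 0) : 0 < α.norm := by
  have h4 := four_mul_norm α
  have hk' : 0 < 4 * k - 1 := by omega
  rcases eq_or_ne α.im 0 with him | him
  · have hre : α.re ≠ 0 := fun hre ↦ hα (QuadraticAlgebra.ext hre him)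
    rw [norm_eq, him]
    have : 0 < α.re ^ 2 := by positivity
    linarith
  · have : 0 < (4 * k - 1) * α.im ^ 2 := by positivity
    nlinarith [sq_nonneg (2 * α.re + α.im)]

theorem isDomain (hk : 0 < k) : IsDomain (QuadraticOrder k) :=
  have : NoZeroDivisors (QuadraticOrder k) := ⟨fun {α β} h ↦ by
    by_contra! hne
    have := mul_pos (norm_pos hk hne.1) (norm_pos hk hne.2)
    rw [← map_mul, h, QuadraticAlgebra.norm_zero] at this
    exact this.false⟩
  NoZeroDivisors.to_isDomain _

theorem eq_one_or_eq_neg_one_of_isUnit (hk : 1 < k) {α : QuadraticOrder k} (hα : IsUnit α) :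
    α = 1 ∨ α = -1 := by
  have hnorm : α.norm = 1 :=
    (Int.isUnit_iff.mp (QuadraticAlgebra.isUnit_iff_norm_isUnit.mp hα)).resolve_right fun h ↦ by
      have := four_mul_norm α
      nlinarith [sq_nonneg (2 * α.re + α.im), sq_nonneg α.im]
  have him : α.im = 0 := by
    by_contra hne
    have : 0 < α.im ^ 2 := by positivity
    nlinarith [four_mul_norm α, sq_nonneg (2 * α.re + α.im)]
  have hre : α.re ^ 2 = 1 := by simpa [norm_eq, him] using hnorm
  rcases Int.isUnit_iff.mp (IsUnit.of_pow_eq_one hre two_ne_zero) with h | h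
  · exact .inl (QuadraticAlgebra.ext h him)
  · exact .inr (QuadraticAlgebra.ext h (by simp [him, QuadraticAlgebra.im_one]))

-- Modulo `2` the order is the field with four elements, where cubes are `0` or `1`.
theorem even_im_cube (hk : Odd k) (α : QuadraticOrder k) : Even (α ^ 3).im := by
  have h : (α ^ 3).im = 3 * (α.re * α.im * (α.re + α.im)) + (1 - k) * α.im ^ 3 := by
    simp only [pow_succ, pow_zero, one_mul, QuadraticAlgebra.re_mul, QuadraticAlgebra.im_mul]
    ring
  rw [h]
  simp only [Int.even_add, Int.even_mul, Int.even_sub, Int.not_even_one, false_iff,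
    Int.not_even_iff_odd, hk, Even.mul_right, iff_true]
  tauto

theorem squarefree_of_isIntegrallyClosed [IsDomain (QuadraticOrder k)]
    [IsIntegrallyClosed (QuadraticOrder k)] : Squarefree (4 * k - 1) := by
  rintro p ⟨b, hb⟩
  set δ : QuadraticOrder k := ⟨-1, 2⟩
  have hsq : (p : QuadraticOrder k) ^ 2 ∣ δ ^ 2 := by
    refine ⟨(-b : ℤ), ?_⟩
    have : δ ^ 2 = ((-(4 * k - 1) : ℤ) : QuadraticOrder k) := by
      rw [sq]
      ext
      · simp only [δ, QuadraticAlgebra.re_mul, QuadraticAlgebra.re_intCast, Int.cast_id]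
        ring
      · simp only [δ, QuadraticAlgebra.im_mul, QuadraticAlgebra.im_intCast]
        ring
    rw [this, hb]
    push_cast
    ring
  obtain ⟨ε, hε⟩ := (IsIntegrallyClosed.pow_dvd_pow_iff two_ne_zero).mp hsq
  have : -1 = p * ε.re := by simpa [δ] using congrArg QuadraticAlgebra.re hε
  exact isUnit_of_dvd_unit ⟨ε.re, this⟩ (by simp)

theorem isCoprime_star {α : QuadraticOrder k} (h : IsCoprime α.trace α.norm) :
    IsCoprime α (star α) := by
  obtain ⟨u, v, huv⟩ := h
  refine ⟨u + v * star α, u, ?_⟩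
  have htrace : (α.trace : QuadraticOrder k) = α + star α :=
    QuadraticAlgebra.algebraMap_trace_eq_add_star α
  calc (u + v * star α) * α + u * star α = u * (α + star α) + v * (α * star α) := by ring
    _ = ((u * α.trace + v * α.norm : ℤ) : QuadraticOrder k) := by
      rw [← htrace, ← intCast_norm]; push_cast; ring
    _ = 1 := by rw [huv, Int.cast_one]

theorem even_im_of_norm_eq_cube [IsDedekindDomain (QuadraticOrder k)]
    [Fintype (ClassGroup (QuadraticOrder k))] (hk : 1 < k) (hodd : Odd k)
    (hcl : Nat.Coprime 3 (Fintype.card (ClassGroup (QuadraticOrder k))))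
    {α : QuadraticOrder k} {z : ℤ} (hcop : IsCoprime α.trace α.norm) (hα : α.norm = z ^ 3) :
    Even α.im := by
  have hmul : α * star α = (z : QuadraticOrder k) ^ 3 := by
    rw [← intCast_norm, hα, Int.cast_pow]
  obtain ⟨γ, ε, hγ⟩ :=
    exists_associated_pow_of_mul_eq_pow_of_coprime_classNumber hcl (isCoprime_star hcop) hmul
  have hcube := even_im_cube hodd γ
  rcases eq_one_or_eq_neg_one_of_isUnit hk ε.isUnit with hε | hε
  · rwa [← hγ, hε, mul_one]
  · rwa [← hγ, hε, mul_neg_one, QuadraticAlgebra.im_neg, even_neg]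

theorem norm_mk_one (r : ℤ) : (⟨r, 1⟩ : QuadraticOrder k).norm = r ^ 2 + r + k := by
  rw [norm_eq]; ring

theorem isPrincipal_span_natCast_mk_of_mul_eq [IsDomain (QuadraticOrder k)] {n m : ℕ} {s : ℤ}
    (h : n * m = s ^ 2 + s + k)
    (hm : (Ideal.span {(m : QuadraticOrder k), ⟨-s - 1, 1⟩}).IsPrincipal) :
    (Ideal.span {(n : QuadraticOrder k), ⟨s, 1⟩}).IsPrincipal := by
  set θ : QuadraticOrder k := ⟨s, 1⟩
  have hθ : (n : QuadraticOrder k) * m = θ * star θ := by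
    rw [← intCast_norm, norm_mk_one, ← h]
    norm_cast
  have hstar : star θ = -⟨-s - 1, 1⟩ := by
    ext <;> simp [θ]
    ring
  have hne : star θ ≠ 0 := fun h ↦ by simpa [θ] using congrArg QuadraticAlgebra.im h
  refine isPrincipal_span_pair_of_mul_eq_mul hne hθ ?_
  rwa [hstar, Ideal.span_pair_neg]

theorem isPrincipal_span_natCast_mk (hk : 0 < k)
    (hinert : ∀ p : ℕ, p.Prime → 3 * (p : ℤ) ^ 2 ≤ 4 * k - 1 →
      ∀ r : ℤ, ¬ (p : ℤ) ∣ r ^ 2 + r + k)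
    {n : ℕ} (hn : 0 < n) {r : ℤ} (hnr : (n : ℤ) ∣ r ^ 2 + r + k) :
    (Ideal.span {(n : QuadraticOrder k), ⟨r, 1⟩}).IsPrincipal := by
  have := isDomain hk
  induction n using Nat.strong_induction_on generalizing r with
  | _ n ih =>
    obtain ⟨s, q, rfl, hs⟩ := exists_eq_add_mul_and_abs_two_mul_add_one_le hn r
    have hshift : (⟨s + q * n, 1⟩ : QuadraticOrder k) = ⟨s, 1⟩ + q * n := by ext <;> simp
    rw [hshift, Ideal.span_pair_add_mul_left]
    obtain ⟨m, hm⟩ : (n : ℤ) ∣ s ^ 2 + s + k := by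
      obtain ⟨c, hc⟩ := hnr
      exact ⟨c - q * (2 * s + q * n + 1), by linear_combination hc⟩
    have hdisc : 4 * (n * m) = (2 * s + 1) ^ 2 + (4 * k - 1) := by linear_combination -4 * hm
    have hm_pos : 0 < m := by
      have : 0 < (n : ℤ) * m := by nlinarith [sq_nonneg (2 * s + 1)]
      exact pos_of_mul_pos_right this (by positivity)
    lift m to ℕ using hm_pos.le
    rcases lt_or_ge m n with hmn | hnm
    · refine isPrincipal_span_natCast_mk_of_mul_eq hm.symm ?_
      exact ih m hmn (mod_cast hm_pos) ⟨n, by linear_combination hm⟩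
    · have hbound : 3 * (n : ℤ) ^ 2 ≤ 4 * k - 1 := by
        have := sq_le_sq' (abs_le.mp hs).1 (abs_le.mp hs).2
        zify at hnm
        nlinarith
      obtain rfl : n = 1 := by
        by_contra hne
        obtain ⟨p, hp, hpn⟩ := Nat.exists_prime_and_dvd hne
        have hpn_le : (p : ℤ) ≤ n := mod_cast Nat.le_of_dvd hn hpn
        exact hinert p hp (by nlinarith) s ((Int.natCast_dvd_natCast.mpr hpn).trans ⟨m, hm⟩)
      rw [Nat.cast_one, Ideal.span_insert, Ideal.span_singleton_one, top_sup_eq]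
      exact top_isPrincipal

theorem eq_span_of_mk_one_mem {I : Ideal (QuadraticOrder k)} {r : ℤ} (hr : ⟨r, 1⟩ ∈ I) :
    I = Ideal.span {((I.under ℤ).absNorm : QuadraticOrder k), ⟨r, 1⟩} := by
  refine le_antisymm (fun β hβ ↦ ?_) (Ideal.span_le.mpr ?_)
  · have hsub : β - β.im * ⟨r, 1⟩ = ((β.re - β.im * r : ℤ) : QuadraticOrder k) := by
      ext <;> simp
    obtain ⟨c, hc⟩ := Int.cast_mem_ideal_iff.mp (hsub ▸ I.sub_mem hβ (I.mul_mem_left _ hr))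
    rw [Ideal.mem_span_pair]
    refine ⟨c, β.im, ?_⟩
    rw [hc] at hsub
    rw [eq_comm, ← sub_eq_iff_eq_add, hsub]
    push_cast
    ring
  · rintro _ (rfl | rfl)
    exacts [Int.absNorm_under_mem I, hr]

theorem exists_mk_one_mem_of_not_dvd_im {P : Ideal (QuadraticOrder k)}
    (hp : ((P.under ℤ).absNorm).Prime) {β : QuadraticOrder k} (hβ : β ∈ P)
    (him : ¬ ((P.under ℤ).absNorm : ℤ) ∣ β.im) : ∃ r : ℤ, ⟨r, 1⟩ ∈ P := by
  obtain ⟨t, v, htv⟩ := (Nat.prime_iff_prime_int.mp hp).coprime_iff_not_dvd.mpr him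
  refine ⟨v * β.re, ?_⟩
  convert P.add_mem (P.mul_mem_left ⟨0, t⟩ (Int.absNorm_under_mem P)) (P.mul_mem_left v hβ) using 1
  ext <;> simp [htv]

theorem eq_span_singleton_of_dvd_im {I : Ideal (QuadraticOrder k)}
    (h : ∀ β ∈ I, ((I.under ℤ).absNorm : ℤ) ∣ β.im) :
    I = Ideal.span {((I.under ℤ).absNorm : QuadraticOrder k)} := by
  refine le_antisymm (fun β hβ ↦ ?_)
    ((Ideal.span_singleton_le_iff_mem I).mpr (Int.absNorm_under_mem I))
  obtain ⟨v, hv⟩ := h β hβ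
  have hre : (β.re : QuadraticOrder k) ∈ I := by
    convert I.sub_mem hβ (I.mul_mem_right ⟨0, v⟩ (Int.absNorm_under_mem I)) using 1
    ext <;> simp [hv]
  obtain ⟨u, hu⟩ := Int.cast_mem_ideal_iff.mp hre
  exact Ideal.mem_span_singleton.mpr ⟨⟨u, v⟩, by ext <;> simp [hu, hv]⟩

theorem isPrincipalIdealRing_of_forall_prime_not_dvd (hk : 0 < k)
    (hinert : ∀ p : ℕ, p.Prime → 3 * (p : ℤ) ^ 2 ≤ 4 * k - 1 →
      ∀ r : ℤ, ¬ (p : ℤ) ∣ r ^ 2 + r + k) :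
    IsPrincipalIdealRing (QuadraticOrder k) := by
  have := isDomain hk
  refine .of_prime_ne_bot fun P _ hP ↦ ?_
  have : NeZero P := ⟨hP⟩
  have hp := Nat.absNorm_under_prime P
  by_cases him : ∀ β ∈ P, ((P.under ℤ).absNorm : ℤ) ∣ β.im
  · exact ⟨_, eq_span_singleton_of_dvd_im him⟩
  · push Not at him
    obtain ⟨β, hβ, hndvd⟩ := him
    obtain ⟨r, hr⟩ := exists_mk_one_mem_of_not_dvd_im hp hβ hndvd
    have hnorm : ((r ^ 2 + r + k : ℤ) : QuadraticOrder k) ∈ P := by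
      rw [← norm_mk_one, intCast_norm]
      exact P.mul_mem_right _ hr
    rw [eq_span_of_mk_one_mem hr]
    exact isPrincipal_span_natCast_mk hk hinert hp.pos (Int.cast_mem_ideal_iff.mp hnorm)

theorem isPrincipalIdealRing_of_mem (hk : k ∈ ({3, 5, 11, 17, 41} : Set ℤ)) :
    IsPrincipalIdealRing (QuadraticOrder k) := by
  simp only [Set.mem_insert_iff, Set.mem_singleton_iff] at hk
  refine isPrincipalIdealRing_of_forall_prime_not_dvd (by omega) fun p hp hbound r hr ↦ ?_
  have hroot : ∃ s : ZMod p, s ^ 2 + s + k = 0 :=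
    ⟨r, mod_cast (ZMod.intCast_zmod_eq_zero_iff_dvd _ p).mpr hr⟩
  obtain rfl | rfl | rfl | rfl : p = 2 ∨ p = 3 ∨ p = 5 ∨ p = 7 := by
    have hp_le : p ≤ 7 := by
      zify
      nlinarith [show k ≤ 41 by omega]
    interval_cases p <;> revert hp <;> decide
  all_goals
    rcases hk with rfl | rfl | rfl | rfl | rfl <;> first | omega | (revert hroot; decide)

end QuadraticOrder

theorem mul_sq_add_sq_ne_four_mul_cube {k : ℤ} [IsDedekindDomain (QuadraticOrder k)]
    [Fintype (ClassGroup (QuadraticOrder k))] (hk : 1 < k) (hodd : Odd k)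
    (hcl : Nat.Coprime 3 (Fintype.card (ClassGroup (QuadraticOrder k)))) {x y : ℤ}
    (hxy : IsCoprime x y) (z : ℤ) : (4 * k - 1) * x ^ 2 + y ^ 2 ≠ 4 * z ^ 3 := by
  intro h
  have hyx : Even (y - x) := by
    have : Even (y ^ 2 - x ^ 2) := ⟨2 * (z ^ 3 - k * x ^ 2), by linear_combination h⟩
    simpa [Int.even_sub, Int.even_pow] using this
  obtain ⟨w, hw⟩ := hyx
  obtain rfl : y = 2 * w + x := by omega
  have hcop : IsCoprime (2 * w + x) (z ^ 3) :=
    (isCoprime_of_sq_dvd_mul_sq_add_sq QuadraticOrder.squarefree_of_isIntegrallyClosed hxy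
      ⟨4 * z, by rw [h]; ring⟩).pow_right
  set α : QuadraticOrder k := ⟨w, x⟩
  have hnorm : α.norm = z ^ 3 := by
    have := QuadraticOrder.four_mul_norm α
    simp only [α] at this ⊢
    linarith
  have htrace : α.trace = 2 * w + x := by simp [QuadraticAlgebra.trace_def, α]
  have hx : Even x :=
    QuadraticOrder.even_im_of_norm_eq_cube hk hodd hcl (by rwa [htrace, hnorm]) hnorm
  have h2 : IsUnit (2 : ℤ) := hxy.isUnit_of_dvd' hx.two_dvd (dvd_add (dvd_mul_right 2 w) hx.two_dvd)
  norm_num [Int.isUnit_iff] at h2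

theorem no_solutions_for_a_in_11_19_43_67_163_general {k : ℤ} [IsDedekindDomain (QuadraticOrder k)]
    [Fintype (ClassGroup (QuadraticOrder k))] (hk : 1 < k) (hodd : Odd k)
    (hcl : Nat.Coprime 3 (Fintype.card (ClassGroup (QuadraticOrder k)))) (n : ℕ) :
    (¬ ∃ x y z : ℤ, Int.gcd x y = 1 ∧ (4 * k - 1) * x ^ 2 + y ^ (2 * n) = 4 * z ^ 3) ∧
    (¬ ∃ x y z : ℤ, Int.gcd x y = 1 ∧ x ^ 2 + (4 * k - 1) * y ^ (2 * n) = 4 * z ^ 3) := by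
  constructor
  · rintro ⟨x, y, z, hxy, h⟩
    rw [mul_comm 2 n, pow_mul] at h
    exact mul_sq_add_sq_ne_four_mul_cube hk hodd hcl
      (Int.isCoprime_iff_gcd_eq_one.mpr hxy).pow_right z h
  · rintro ⟨x, y, z, hxy, h⟩
    rw [mul_comm 2 n, pow_mul, add_comm] at h
    exact mul_sq_add_sq_ne_four_mul_cube hk hodd hcl
      (Int.isCoprime_iff_gcd_eq_one.mpr hxy).symm.pow_left z h

theorem no_solutions_for_a_in_11_19_43_67_163
    (a : ℤ) (ha : a ∈ ({11, 19, 43, 67, 163} : Set ℤ))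
    (n : ℕ) (hn : 0 < n) :
    (¬ ∃ x y z : ℤ, Int.gcd x y = 1 ∧ a * x ^ 2 + y ^ (2 * n) = 4 * z ^ 3) ∧
    (¬ ∃ x y z : ℤ, Int.gcd x y = 1 ∧ x ^ 2 + a * y ^ (2 * n) = 4 * z ^ 3) := by
  obtain ⟨k, hk, rfl⟩ : ∃ k ∈ ({3, 5, 11, 17, 41} : Set ℤ), a = 4 * k - 1 := by
    rcases ha with rfl | rfl | rfl | rfl | rfl
    exacts [⟨3, by simp⟩, ⟨5, by simp⟩, ⟨11, by simp⟩, ⟨17, by simp⟩, ⟨41, by simp⟩]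
  have := QuadraticOrder.isPrincipalIdealRing_of_mem hk
  obtain ⟨hk1, hodd⟩ : 1 < k ∧ Odd k := by
    rcases hk with rfl | rfl | rfl | rfl | rfl <;> decide
  have := QuadraticOrder.isDomain (zero_lt_one.trans hk1)
  exact no_solutions_for_a_in_11_19_43_67_163_general hk1 hodd
    (card_classGroup_eq_one (R := QuadraticOrder k) ▸ Nat.coprime_one_right 3) n
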